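/- Let f : ℝⁿ → ℝ ∪ {+∞} be standard self-concordant on its open convex effective domain with ∇²f(x) positive definite for all x ∈ dom f, g : ℝⁿ → ℝ ∪ {+∞} proper, lower semicontinuous and convex, and t > 0. Let x*_t be the unique minimizer of F(·;t) := f + t⁻¹g, let x_t ∈ dom f ∩ dom g, set λ_t := ‖x_t − x*_t‖_{x*_t}, and assume 0 ≤ λ_t < 1 − √2/2. Let x̄⁺_t be the exact minimizer of the model F̂(·; t, x_t) and let x⁺_t ∈ dom f ∩ dom g be a δ-solution of this subproblem for some δ ≥ 0; set λ⁺_t := ‖x⁺_t − x*_t‖_{x*_t}. Then λ⁺_t ≤ δ/(1 − λ_t) + ((3 − 2λ_t)/(1 − 4λ_t + 2λ_t²))·λ_t². -/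

import Mathlib

open RealInnerProductSpace

/-- The local norm `‖u‖_x = (uᵀ ∇²f(x) u)^(1/2)`, where `H` stands for the Hessian `∇²f(x)`. -/
noncomputable def locNorm {n : ℕ}
    (H : EuclideanSpace ℝ (Fin n) →L[ℝ] EuclideanSpace ℝ (Fin n))
    (u : EuclideanSpace ℝ (Fin n)) : ℝ :=
  Real.sqrt ⟪u, H u⟫

/-- `f` is standard self-concordant on `s`: along every line, `|φ'''(τ)| ≤ 2 φ''(τ)^(3/2)`. -/
def StandardSelfConcordantOn {n : ℕ} (f : EuclideanSpace ℝ (Fin n) → ℝ)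
    (s : Set (EuclideanSpace ℝ (Fin n))) : Prop :=
  ∀ x ∈ s, ∀ v : EuclideanSpace ℝ (Fin n), ∀ τ : ℝ, x + τ • v ∈ s →
    |iteratedDeriv 3 (fun r : ℝ => f (x + r • v)) τ| ≤
      2 * (iteratedDeriv 2 (fun r : ℝ => f (x + r • v)) τ) ^ ((3 : ℝ) / 2)
section helpers
variable {E : Type*} [NormedAddCommGroup E] [NormedSpace ℝ E]

theorem aux_key (c s r A B C D : ℝ) (h : c^2+s^2=1) (hr : r^2=3) :
  (4*c^3-3*c)*A + (3*s-4*s^3)*B =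
   (4*c^2-1)^2/9 * (A*c^3+3*B*c^2*s+3*C*c*s^2+D*s^3)
  + (4*((-c-r*s)/2)^2-1)^2/9 * (A*((-c-r*s)/2)^3+3*B*((-c-r*s)/2)^2*((r*c-s)/2)+3*C*((-c-r*s)/2)*((r*c-s)/2)^2+D*((r*c-s)/2)^3)
  + (4*((-c+r*s)/2)^2-1)^2/9 * (A*((-c+r*s)/2)^3+3*B*((-c+r*s)/2)^2*((-r*c-s)/2)+3*C*((-c+r*s)/2)*((-r*c-s)/2)^2+D*((-r*c-s)/2)^3) := by
  grind

theorem aux_key2 (c s r : ℝ) (h : c^2+s^2=1) (hr : r^2=3) :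
   (4*c^2-1)^2/9 + (4*((-c-r*s)/2)^2-1)^2/9 + (4*((-c+r*s)/2)^2-1)^2/9 = 1 := by
  grind

/-- A binary cubic form bounded by `M` on the unit circle: Szegő type bound. -/
theorem aux_cubic (A B C D M a b : ℝ) (hab : a^2+b^2=1)
    (hM : ∀ x y : ℝ, x^2+y^2=1 → A*x^3+3*B*x^2*y+3*C*x*y^2+D*y^3 ≤ M) :
    a*A+b*B ≤ M := by
  obtain ⟨α, ha, hb⟩ : ∃ α : ℝ, a = Real.cos α ∧ b = Real.sin α := by
    have hn : ‖(⟨a, b⟩ : ℂ)‖ = 1 := by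
      rw [Complex.norm_def, Complex.normSq_mk, Real.sqrt_eq_one]; nlinarith
    refine ⟨Complex.arg ⟨a, b⟩, ?_, ?_⟩
    · have := Complex.norm_mul_cos_arg ⟨a, b⟩
      rw [hn] at this; simpa using this.symm
    · have := Complex.norm_mul_sin_arg ⟨a, b⟩
      rw [hn] at this; simpa using this.symm
  have hα : α = 3 * (α/3) := by ring
  have h1 : a = 4 * Real.cos (α/3)^3 - 3 * Real.cos (α/3) := by
    rw [ha, ← Real.cos_three_mul, ← hα]
  have h2 : b = 3 * Real.sin (α/3) - 4 * Real.sin (α/3)^3 := by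
    rw [hb, ← Real.sin_three_mul, ← hα]
  have hcs := Real.cos_sq_add_sin_sq (α/3)
  generalize Real.cos (α/3) = c at *
  generalize Real.sin (α/3) = s at *
  have hr : (√3)^2 = (3:ℝ) := Real.sq_sqrt (by norm_num)
  generalize √3 = r at *
  rw [h1, h2, aux_key c s r A B C D hcs hr]
  have k2 := aux_key2 c s r hcs hr
  have e1 := hM c s hcs
  have e2 := hM ((-c-r*s)/2) ((r*c-s)/2) (by grind)
  have e3 := hM ((-c+r*s)/2) ((-r*c-s)/2) (by grind)
  have f1 := mul_le_mul_of_nonneg_left e1 (show 0 ≤ (4*c^2-1)^2/9 by positivity)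
  have f2 := mul_le_mul_of_nonneg_left e2 (show 0 ≤ (4*((-c-r*s)/2)^2-1)^2/9 by positivity)
  have f3 := mul_le_mul_of_nonneg_left e3 (show 0 ≤ (4*((-c+r*s)/2)^2-1)^2/9 by positivity)
  have : M = (4*c^2-1)^2/9*M + (4*((-c-r*s)/2)^2-1)^2/9*M + (4*((-c+r*s)/2)^2-1)^2/9*M := by
    rw [← add_mul, ← add_mul, k2, one_mul]
  linarith

theorem aux_nonneg (Q : E →L[ℝ] E →L[ℝ] ℝ) (hpos : ∀ u, u ≠ 0 → 0 < Q u u) (u : E) :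
    0 ≤ Q u u := by
  by_cases h : u = 0
  · simp [h]
  · exact (hpos u h).le

theorem aux_cs (Q : E →L[ℝ] E →L[ℝ] ℝ) (hsym : ∀ u v, Q u v = Q v u)
    (hpos : ∀ u, u ≠ 0 → 0 < Q u u) (u v : E) : Q u v ≤ √(Q u u) * √(Q v v) := by
  have h := aux_nonneg Q hpos (√(Q v v) • u - √(Q u u) • v)
  have hu := aux_nonneg Q hpos u
  have hv := aux_nonneg Q hpos v
  by_cases hu0 : u = 0
  · simp [hu0]
  by_cases hv0 : v = 0
  · simp [hv0]
  have h1 : 0 < √(Q u u) := Real.sqrt_pos.2 (hpos u hu0)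
  have h2 : 0 < √(Q v v) := Real.sqrt_pos.2 (hpos v hv0)
  have e1 := Real.sq_sqrt hu
  have e2 := Real.sq_sqrt hv
  simp only [map_sub, map_smul, _root_.sub_apply, _root_.smul_apply,
    smul_eq_mul, hsym v u] at h
  generalize √(Q u u) = p at *
  generalize √(Q v v) = q at *
  rw [← e1, ← e2] at h
  have : 0 ≤ (2 * (p * q)) * (p * q - Q u v) := by nlinarith
  have := nonneg_of_mul_nonneg_right this (by positivity)
  linarith

theorem aux_tri (Q : E →L[ℝ] E →L[ℝ] ℝ) (hsym : ∀ u v, Q u v = Q v u)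
    (hpos : ∀ u, u ≠ 0 → 0 < Q u u) (u v : E) :
    √(Q (u + v) (u + v)) ≤ √(Q u u) + √(Q v v) := by
  have h := aux_cs Q hsym hpos u v
  have hu := aux_nonneg Q hpos u
  have hv := aux_nonneg Q hpos v
  have e1 := Real.sq_sqrt hu
  have e2 := Real.sq_sqrt hv
  rw [Real.sqrt_le_left (by positivity)]
  simp only [map_add, _root_.add_apply, hsym v u]
  nlinarith

theorem aux_polar1 (Q : E →L[ℝ] E →L[ℝ] ℝ) (hsym : ∀ u v, Q u v = Q v u)
    (hpos : ∀ u, u ≠ 0 → 0 < Q u u)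
    (T : E →L[ℝ] E →L[ℝ] E →L[ℝ] ℝ) (h12 : ∀ u v w, T u v w = T v u w)
    (h23 : ∀ u v w, T u v w = T u w v)
    (hT : ∀ x, |T x x x| ≤ 2 * √(Q x x) ^ 3) (u v : E) (hu : Q u u = 1) (hv : Q v v = 1) :
    T u u v ≤ 2 := by
  obtain ⟨a, b, w, hw, huw, hvw, hab⟩ : ∃ (a b : ℝ) (w : E), Q w w ≤ 1 ∧ Q u w = 0 ∧
      v = a • u + b • w ∧ a^2 + b^2 = 1 := by
    set z := v - Q u v • u with hz
    have hzz : Q z z = 1 - (Q u v)^2 := by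
      simp only [hz, map_sub, map_smul, _root_.sub_apply,
        _root_.smul_apply, smul_eq_mul, hsym v u, hu, hv]; ring
    have huz : Q u z = 0 := by
      simp only [hz, map_sub, map_smul, smul_eq_mul, hu]; ring
    by_cases h0 : z = 0
    · refine ⟨Q u v, 0, 0, by simp, by simp, ?_, ?_⟩
      · simp only [smul_zero, add_zero]; exact sub_eq_zero.1 h0
      · rw [h0] at hzz; simp at hzz; linarith
    · have hp := hpos z h0
      have hs : 0 < √(Q z z) := Real.sqrt_pos.2 hp
      have hs2 := Real.sq_sqrt hp.le
      refine ⟨Q u v, √(Q z z), (√(Q z z))⁻¹ • z, ?_, ?_, ?_, ?_⟩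
      · simp only [map_smul, _root_.smul_apply, smul_eq_mul]
        rw [← hs2, Real.sqrt_sq hs.le]
        field_simp; rfl
      · simp [huz]
      · rw [smul_smul, mul_inv_cancel₀ hs.ne', one_smul, hz]; abel
      · rw [hs2, hzz]; ring
  have hex : T u u v = a * T u u u + b * T u u w := by
    rw [hvw]; simp
  rw [hex]
  apply aux_cubic (T u u u) (T u u w) (T u w w) (T w w w) 2 a b hab
  intro x y hxy
  have h1 := hT (x • u + y • w)
  have h2 : T (x • u + y • w) (x • u + y • w) (x • u + y • w) =
      T u u u * x^3 + 3 * T u u w * x^2 * y + 3 * T u w w * x * y^2 + T w w w * y^3 := by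
    simp only [map_add, map_smul, _root_.add_apply, _root_.smul_apply,
      smul_eq_mul]
    rw [h12 w u u, h23 u w u, h12 w u w, h23 w w u, h12 w u w]
    ring
  have h3 : Q (x • u + y • w) (x • u + y • w) ≤ 1 := by
    simp only [map_add, map_smul, _root_.add_apply, _root_.smul_apply,
      smul_eq_mul, hsym w u, huw, hu]
    nlinarith [sq_nonneg y]
  have h4 : √(Q (x • u + y • w) (x • u + y • w)) ^ 3 ≤ 1 :=
    pow_le_one₀ (Real.sqrt_nonneg _) (Real.sqrt_le_one.2 h3)
  rw [h2] at h1
  linarith [le_abs_self (T u u u * x^3 + 3 * T u u w * x^2 * y + 3 * T u w w * x * y^2 + T w w w * y^3)]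

theorem aux_polar (Q : E →L[ℝ] E →L[ℝ] ℝ) (hsym : ∀ u v, Q u v = Q v u)
    (hpos : ∀ u, u ≠ 0 → 0 < Q u u)
    (T : E →L[ℝ] E →L[ℝ] E →L[ℝ] ℝ) (h12 : ∀ u v w, T u v w = T v u w)
    (h23 : ∀ u v w, T u v w = T u w v)
    (hT : ∀ x, |T x x x| ≤ 2 * √(Q x x) ^ 3) (u v : E) :
    T u u v ≤ 2 * Q u u * √(Q v v) := by
  by_cases hu0 : u = 0
  · simp [hu0]
  by_cases hv0 : v = 0
  · simp [hv0]
  have h1 : 0 < √(Q u u) := Real.sqrt_pos.2 (hpos u hu0)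
  have h2 : 0 < √(Q v v) := Real.sqrt_pos.2 (hpos v hv0)
  have e1 := Real.sq_sqrt (hpos u hu0).le
  have e2 := Real.sq_sqrt (hpos v hv0).le
  have := aux_polar1 Q hsym hpos T h12 h23 hT ((√(Q u u))⁻¹ • u) ((√(Q v v))⁻¹ • v)
    (by simp only [map_smul, _root_.smul_apply, smul_eq_mul]
        nth_rewrite 3 [← e1]; field_simp)
    (by simp only [map_smul, _root_.smul_apply, smul_eq_mul]
        nth_rewrite 3 [← e2]; field_simp)
  simp only [map_smul, _root_.smul_apply, smul_eq_mul] at this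
  generalize √(Q v v) = q at *
  have e3 : T u u v = √(Q u u) ^2 * q * (q⁻¹ * ((√(Q u u))⁻¹ * ((√(Q u u))⁻¹ * T u u v))) := by
    field_simp
  rw [e3, ← e1, Real.sqrt_sq h1.le]
  have hh : 0 < √(Q u u) ^2 * q := by positivity
  nlinarith [mul_le_mul_of_nonneg_left this hh.le]

theorem aux_mono (F F' : ℝ → ℝ) (hF : ∀ s ∈ Set.Icc (0:ℝ) 1, HasDerivAt F (F' s) s)
    (h0 : ∀ s ∈ Set.Icc (0:ℝ) 1, 0 ≤ F' s) (s : ℝ) (hs : s ∈ Set.Icc (0:ℝ) 1) : F 0 ≤ F s := by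
  have : MonotoneOn F (Set.Icc 0 1) := by
    apply monotoneOn_of_deriv_nonneg (convex_Icc 0 1)
    · exact fun x hx => (hF x hx).continuousAt.continuousWithinAt
    · exact fun x hx => (hF x (interior_subset hx)).differentiableAt.differentiableWithinAt
    · intro x hx
      rw [(hF x (interior_subset hx)).deriv]
      exact h0 x (interior_subset hx)
  exact this (by simp) hs hs.1

/-- Behaviour of the Hessian along a segment. -/
theorem aux_seg (Q : ℝ → E →L[ℝ] E →L[ℝ] ℝ) (T : ℝ → E →L[ℝ] E →L[ℝ] E →L[ℝ] ℝ) (d : E)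
    (hpos : ∀ s ∈ Set.Icc (0:ℝ) 1, ∀ u, u ≠ 0 → 0 < Q s u u)
    (hder : ∀ s ∈ Set.Icc (0:ℝ) 1, ∀ u v, HasDerivAt (fun s => Q s u v) (T s d u v) s)
    (hT : ∀ s ∈ Set.Icc (0:ℝ) 1, ∀ u v, T s v u u ≤ 2 * Q s u u * √(Q s v v))
    (lam : ℝ) (hlam : lam = √(Q 0 d d)) (hl1 : lam < 1) :
    ∀ s ∈ Set.Icc (0:ℝ) 1, √(Q s d d) ≤ lam / (1 - lam * s) ∧
      ∀ u, (1 - lam * s)^2 * Q 0 u u ≤ Q s u u ∧ (1 - lam * s)^2 * Q s u u ≤ Q 0 u u := by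
  have hl0 : 0 ≤ lam := hlam ▸ Real.sqrt_nonneg _
  have hden : ∀ s ∈ Set.Icc (0:ℝ) 1, 0 < 1 - lam * s := by
    intro s hs
    nlinarith [hs.1, hs.2]
  have hTn : ∀ s ∈ Set.Icc (0:ℝ) 1, ∀ u v, - (2 * Q s u u * √(Q s v v)) ≤ T s v u u := by
    intro s hs u v
    have := hT s hs u (-v)
    simp at this
    linarith
  have hrho : ∀ s ∈ Set.Icc (0:ℝ) 1, √(Q s d d) ≤ lam / (1 - lam * s) := by
    intro s hs
    by_cases hd : d = 0
    · simp only [hd, map_zero, Real.sqrt_zero]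
      exact div_nonneg hl0 (hden s hs).le
    have hp : ∀ s ∈ Set.Icc (0:ℝ) 1, 0 < √(Q s d d) := fun s hs => Real.sqrt_pos.2 (hpos s hs d hd)
    have hm := aux_mono (fun s => (√(Q s d d))⁻¹ + s)
      (fun s => -(T s d d d / (2 * √(Q s d d))) / (√(Q s d d))^2 + 1)
      (fun s hs => (((hder s hs d d).sqrt (hpos s hs d hd).ne').inv (hp s hs).ne').add (hasDerivAt_id s))
      (by
        intro s hs
        have h1 := hT s hs d d
        have h2 := hp s hs
        have h3 := Real.sq_sqrt (hpos s hs d hd).le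
        generalize √(Q s d d) = q at *
        rw [← h3] at h1
        have : T s d d d / (2 * q) / q^2 ≤ 1 := by
          rw [div_div, div_le_one (by positivity)]; nlinarith
        rw [neg_div]; linarith) s hs
    have h0 : 0 < lam := hlam ▸ hp 0 (by simp)
    simp only [← hlam, add_zero] at hm
    have h2 := hp s hs
    have h4 := hden s hs
    rw [le_div_iff₀ h4]
    have h5 : lam * √(Q s d d) * lam⁻¹ ≤ lam * √(Q s d d) * ((√(Q s d d))⁻¹ + s) :=
      mul_le_mul_of_nonneg_left hm (by positivity)
    have e1 : lam * √(Q s d d) * lam⁻¹ = √(Q s d d) := by field_simp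
    have e2 : lam * √(Q s d d) * ((√(Q s d d))⁻¹ + s) = lam + lam * √(Q s d d) * s := by field_simp
    rw [e1, e2] at h5
    linarith
  intro s hs
  refine ⟨hrho s hs, fun u => ⟨?_, ?_⟩⟩
  · have hm := aux_mono (fun s => Q s u u / (1 - lam * s)^2)
      (fun s => (T s d u u * (1 - lam * s)^2 - Q s u u * (2 * (1 - lam * s) * (-lam))) / ((1 - lam * s)^2)^2)
      (fun s hs => by
        have h1 : HasDerivAt (fun s : ℝ => (1 - lam * s)^2) (2 * (1 - lam * s) * (-lam)) s := by
          have := ((((hasDerivAt_id s).const_mul lam).const_sub 1).pow 2)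
          exact this.congr_deriv (by simp)
        exact (hder s hs u u).div h1 (pow_pos (hden s hs) 2).ne')
      (by
        intro s hs
        apply div_nonneg _ (by positivity)
        have h1 := hTn s hs u d
        have h2 := hrho s hs
        have h3 := hden s hs
        have h4 : 0 ≤ Q s u u := aux_nonneg _ (hpos s hs) u
        rw [le_div_iff₀ h3] at h2
        have h5 := mul_le_mul_of_nonneg_left h1 (sq_nonneg (1 - lam * s))
        have h6 := mul_le_mul_of_nonneg_left h2 (mul_nonneg h3.le h4)
        nlinarith) s hs
    have h3 := hden s hs
    simp only [mul_zero, sub_zero, one_pow, div_one] at hm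
    rw [le_div_iff₀ (by positivity)] at hm
    linarith
  · have hm := aux_mono (fun s => -(Q s u u * (1 - lam * s)^2))
      (fun s => -(T s d u u * (1 - lam * s)^2 + Q s u u * (2 * (1 - lam * s) * (-lam))))
      (fun s hs => by
        have h1 : HasDerivAt (fun s : ℝ => (1 - lam * s)^2) (2 * (1 - lam * s) * (-lam)) s := by
          have := ((((hasDerivAt_id s).const_mul lam).const_sub 1).pow 2)
          exact this.congr_deriv (by simp)
        exact ((hder s hs u u).mul h1).neg)
      (by
        intro s hs
        have h1 := hT s hs u d
        have h2 := hrho s hs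
        have h3 := hden s hs
        have h4 : 0 ≤ Q s u u := aux_nonneg _ (hpos s hs) u
        rw [le_div_iff₀ h3] at h2
        have h5 := mul_le_mul_of_nonneg_left h1 (sq_nonneg (1 - lam * s))
        have h6 := mul_le_mul_of_nonneg_left h2 (mul_nonneg h3.le h4)
        nlinarith) s hs
    simp only [mul_zero, sub_zero, one_pow, mul_one] at hm
    linarith

/-- The gradient bound along a segment. -/
theorem aux_grad (Q : ℝ → E →L[ℝ] E →L[ℝ] ℝ) (T : ℝ → E →L[ℝ] E →L[ℝ] E →L[ℝ] ℝ) (d : E)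
    (hpos : ∀ s ∈ Set.Icc (0:ℝ) 1, ∀ u, u ≠ 0 → 0 < Q s u u)
    (hder : ∀ s ∈ Set.Icc (0:ℝ) 1, ∀ u v, HasDerivAt (fun s => Q s u v) (T s d u v) s)
    (hT : ∀ s ∈ Set.Icc (0:ℝ) 1, ∀ u v, T s v u u ≤ 2 * Q s u u * √(Q s v v))
    (h13 : ∀ s ∈ Set.Icc (0:ℝ) 1, ∀ u v, T s u u v = T s v u u)
    (lam : ℝ) (hlam : lam = √(Q 0 d d)) (hl1 : lam < 1) (e : E) (h : ℝ → ℝ)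
    (hh : ∀ s ∈ Set.Icc (0:ℝ) 1, HasDerivAt h (Q s d e) s) :
    h 0 - h 1 + Q 1 d e ≤ lam^2 / (1 - lam)^2 * √(Q 0 e e) := by
  have hseg := aux_seg Q T d hpos hder hT lam hlam hl1
  have hl0 : 0 ≤ lam := hlam ▸ Real.sqrt_nonneg _
  have hden : ∀ s ∈ Set.Icc (0:ℝ) 1, 0 < 1 - lam * s := by
    intro s hs
    nlinarith [hs.1, hs.2]
  set N := √(Q 0 e e) with hN
  have hN0 : 0 ≤ N := Real.sqrt_nonneg _
  have key : ∀ s ∈ Set.Icc (0:ℝ) 1, T s d d e ≤ 2 * lam^2 * N / (1 - lam * s)^3 := by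
    intro s hs
    obtain ⟨h1, h2⟩ := hseg s hs
    have h3 := (h2 e).2
    have h4 := hden s hs
    have h5 : √(Q s e e) ≤ N / (1 - lam * s) := by
      rw [le_div_iff₀ h4, hN]
      apply Real.le_sqrt_of_sq_le
      rw [mul_pow, Real.sq_sqrt (aux_nonneg _ (hpos s hs) e)]
      linarith
    have h6 : Q s d d ≤ (lam / (1 - lam * s))^2 := by
      rw [← Real.sq_sqrt (aux_nonneg _ (hpos s hs) d)]
      gcongr
    rw [h13 s hs]
    calc T s e d d ≤ 2 * Q s d d * √(Q s e e) := hT s hs d e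
      _ ≤ 2 * (lam / (1 - lam * s))^2 * (N / (1 - lam * s)) := by gcongr
      _ = _ := by field_simp
  have hm := aux_mono (fun s => (h s - s * Q s d e) + lam^2 * N * (s / (1 - lam * s))^2)
      (fun s => (Q s d e - (1 * Q s d e + s * T s d d e)) +
        lam^2 * N * (2 * (s / (1 - lam * s)) * ((1 * (1 - lam * s) - s * (-lam)) / (1 - lam * s)^2)))
      (fun s hs => by
        have h1 : HasDerivAt (fun s : ℝ => 1 - lam * s) (-lam) s := by
          have := (((hasDerivAt_id s).const_mul lam).const_sub 1)
          exact this.congr_deriv (by simp)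
        have h2 := (((hasDerivAt_id s).div h1 (hden s hs).ne').pow 2).const_mul (lam^2*N)
        have h3 := ((hh s hs).sub ((hasDerivAt_id s).mul (hder s hs d e))).add h2
        exact h3.congr_deriv (by simp))
      (by
        intro s hs
        have h1 := mul_le_mul_of_nonneg_left (key s hs) hs.1
        have h4 := hden s hs
        have e1 : lam^2 * N * (2 * (s / (1 - lam * s)) * ((1 * (1 - lam * s) - s * (-lam)) / (1 - lam * s)^2))
          = s * (2 * lam^2 * N / (1 - lam * s)^3) := by field_simp; ring
        rw [e1]
        linarith) 1 (by simp)
  simp only [zero_mul, zero_div, mul_one, one_mul, sub_zero] at hm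
  have e2 : lam^2 * N * (1 / (1 - lam))^2 = lam^2 / (1 - lam)^2 * N := by
    rw [div_pow, one_pow]; ring
  rw [e2] at hm
  norm_num at hm
  linarith

/-- First-order optimality from one-sided minimality. -/
theorem aux_opt (φ : ℝ → ℝ) (a c : ℝ) (hφ : HasDerivAt φ a 0)
    (h : ∀ᶠ r in nhdsWithin (0:ℝ) (Set.Ioi 0), φ 0 ≤ φ r + r * c) : 0 ≤ a + c := by
  have h1 : HasDerivAt (fun r => φ r + r * c) (a + 1 * c) 0 := hφ.add ((hasDerivAt_id 0).mul_const c)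
  have h2 := h1.hasDerivWithinAt (s := Set.Ioi 0)
  rw [hasDerivWithinAt_iff_tendsto_slope' (by simp)] at h2
  rw [one_mul] at h2
  refine ge_of_tendsto h2 ?_
  filter_upwards [h, self_mem_nhdsWithin] with r hr hr0
  rw [slope_def_field]
  apply div_nonneg
  · simp; linarith
  · simp at hr0 ⊢; exact hr0.le

end helpers
section calculus
variable {E : Type*} [NormedAddCommGroup E] [NormedSpace ℝ E]

theorem aux_line (x v : E) (τ : ℝ) : HasDerivAt (fun r : ℝ => x + r • v) v τ := by
  simpa using ((hasDerivAt_id τ).smul_const v).const_add x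

theorem aux_comp {F : Type*} [NormedAddCommGroup F] [NormedSpace ℝ F] {G : E → F} {G' : E →L[ℝ] F}
    {x d : E} {τ : ℝ} (h : HasFDerivAt G G' (x + τ • d)) :
    HasDerivAt (fun r : ℝ => G (x + r • d)) (G' d) τ :=
  h.comp_hasDerivAt τ (aux_line x d τ)

theorem aux_d1 {f : E → ℝ} {s : Set E} (hs : IsOpen s) (hf : ContDiffOn ℝ 3 f s) :
    ContDiffOn ℝ 2 (fderiv ℝ f) s := hf.fderiv_of_isOpen hs (by norm_num)

theorem aux_d2 {f : E → ℝ} {s : Set E} (hs : IsOpen s) (hf : ContDiffOn ℝ 3 f s) :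
    ContDiffOn ℝ 1 (fderiv ℝ (fderiv ℝ f)) s := (aux_d1 hs hf).fderiv_of_isOpen hs (by norm_num)

theorem aux_h1 {f : E → ℝ} {s : Set E} (hs : IsOpen s) (hf : ContDiffOn ℝ 3 f s) {x : E}
    (hx : x ∈ s) : HasFDerivAt f (fderiv ℝ f x) x :=
  ((hf.contDiffAt (hs.mem_nhds hx)).differentiableAt (by norm_num)).hasFDerivAt

theorem aux_h2 {f : E → ℝ} {s : Set E} (hs : IsOpen s) (hf : ContDiffOn ℝ 3 f s) {x : E}
    (hx : x ∈ s) : HasFDerivAt (fderiv ℝ f) (fderiv ℝ (fderiv ℝ f) x) x :=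
  (((aux_d1 hs hf).contDiffAt (hs.mem_nhds hx)).differentiableAt (by norm_num)).hasFDerivAt

theorem aux_h3 {f : E → ℝ} {s : Set E} (hs : IsOpen s) (hf : ContDiffOn ℝ 3 f s) {x : E}
    (hx : x ∈ s) :
    HasFDerivAt (fderiv ℝ (fderiv ℝ f)) (fderiv ℝ (fderiv ℝ (fderiv ℝ f)) x) x :=
  (((aux_d2 hs hf).contDiffAt (hs.mem_nhds hx)).differentiableAt (by norm_num)).hasFDerivAt

theorem aux_sym2 {f : E → ℝ} {s : Set E} (hs : IsOpen s) (hf : ContDiffOn ℝ 3 f s) {x : E}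
    (hx : x ∈ s) (u v : E) :
    fderiv ℝ (fderiv ℝ f) x u v = fderiv ℝ (fderiv ℝ f) x v u :=
  second_derivative_symmetric_of_eventually
    (by filter_upwards [hs.mem_nhds hx] with y hy using aux_h1 hs hf hy) (aux_h2 hs hf hx) u v

theorem aux_sym12 {f : E → ℝ} {s : Set E} (hs : IsOpen s) (hf : ContDiffOn ℝ 3 f s) {x : E}
    (hx : x ∈ s) (u v w : E) :
    fderiv ℝ (fderiv ℝ (fderiv ℝ f)) x u v w = fderiv ℝ (fderiv ℝ (fderiv ℝ f)) x v u w := by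
  rw [second_derivative_symmetric_of_eventually
    (by filter_upwards [hs.mem_nhds hx] with y hy using aux_h2 hs hf hy) (aux_h3 hs hf hx) u v]

theorem aux_line1 {f : E → ℝ} {s : Set E} (hs : IsOpen s) (hf : ContDiffOn ℝ 3 f s) {x d : E}
    {τ : ℝ} (hx : x + τ • d ∈ s) :
    HasDerivAt (fun r : ℝ => f (x + r • d)) (fderiv ℝ f (x + τ • d) d) τ :=
  (aux_h1 hs hf hx).comp_hasDerivAt τ (aux_line x d τ)

theorem aux_line2 {f : E → ℝ} {s : Set E} (hs : IsOpen s) (hf : ContDiffOn ℝ 3 f s) {x d : E}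
    {τ : ℝ} (hx : x + τ • d ∈ s) (u : E) :
    HasDerivAt (fun r : ℝ => fderiv ℝ f (x + r • d) u)
      (fderiv ℝ (fderiv ℝ f) (x + τ • d) d u) τ := by
  have h := (aux_h2 hs hf hx).comp_hasDerivAt τ (aux_line x d τ)
  simpa using h.clm_apply (hasDerivAt_const τ u)

theorem aux_line3 {f : E → ℝ} {s : Set E} (hs : IsOpen s) (hf : ContDiffOn ℝ 3 f s) {x d : E}
    {τ : ℝ} (hx : x + τ • d ∈ s) (u v : E) :
    HasDerivAt (fun r : ℝ => fderiv ℝ (fderiv ℝ f) (x + r • d) u v)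
      (fderiv ℝ (fderiv ℝ (fderiv ℝ f)) (x + τ • d) d u v) τ := by
  have h : HasDerivAt (fun r : ℝ => fderiv ℝ (fderiv ℝ f) (x + r • d))
      (fderiv ℝ (fderiv ℝ (fderiv ℝ f)) (x + τ • d) d) τ :=
    aux_comp (F := E →L[ℝ] E →L[ℝ] ℝ) (aux_h3 hs hf hx)
  have h' := h.clm_apply (hasDerivAt_const τ u)
  simpa using h'.clm_apply (hasDerivAt_const τ v)

theorem aux_ev {s : Set E} (hs : IsOpen s) {x d : E}
    {τ : ℝ} (hx : x + τ • d ∈ s) : ∀ᶠ r in nhds τ, x + r • d ∈ s :=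
  (aux_line x d τ).continuousAt.eventually (hs.mem_nhds hx)

theorem aux_sym23 {f : E → ℝ} {s : Set E} (hs : IsOpen s) (hf : ContDiffOn ℝ 3 f s) {x : E}
    (hx : x ∈ s) (u v w : E) :
    fderiv ℝ (fderiv ℝ (fderiv ℝ f)) x u v w = fderiv ℝ (fderiv ℝ (fderiv ℝ f)) x u w v := by
  have hx0 : x + (0:ℝ) • u ∈ s := by simpa using hx
  have h1 := aux_line3 hs hf hx0 v w
  have h2 := aux_line3 hs hf hx0 w v
  have h3 : (fun r : ℝ => fderiv ℝ (fderiv ℝ f) (x + r • u) v w) =ᶠ[nhds 0]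
      (fun r : ℝ => fderiv ℝ (fderiv ℝ f) (x + r • u) w v) := by
    filter_upwards [aux_ev hs hx0] with r hr using aux_sym2 hs hf hr v w
  have := (h2.congr_of_eventuallyEq h3).unique h1
  simpa using this.symm

theorem aux_it2 {f : E → ℝ} {s : Set E} (hs : IsOpen s) (hf : ContDiffOn ℝ 3 f s) {x d : E}
    {τ : ℝ} (hx : x + τ • d ∈ s) :
    iteratedDeriv 2 (fun r : ℝ => f (x + r • d)) τ = fderiv ℝ (fderiv ℝ f) (x + τ • d) d d := by
  rw [iteratedDeriv_succ, iteratedDeriv_one]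
  have : deriv (fun r : ℝ => f (x + r • d)) =ᶠ[nhds τ] fun r => fderiv ℝ f (x + r • d) d := by
    filter_upwards [aux_ev hs hx] with r hr using (aux_line1 hs hf hr).deriv
  rw [this.deriv_eq]
  exact (aux_line2 hs hf hx d).deriv

theorem aux_it3 {f : E → ℝ} {s : Set E} (hs : IsOpen s) (hf : ContDiffOn ℝ 3 f s) {x d : E}
    {τ : ℝ} (hx : x + τ • d ∈ s) :
    iteratedDeriv 3 (fun r : ℝ => f (x + r • d)) τ =
      fderiv ℝ (fderiv ℝ (fderiv ℝ f)) (x + τ • d) d d d := by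
  rw [iteratedDeriv_succ]
  have : iteratedDeriv 2 (fun r : ℝ => f (x + r • d)) =ᶠ[nhds τ]
      fun r => fderiv ℝ (fderiv ℝ f) (x + r • d) d d := by
    filter_upwards [aux_ev hs hx] with r hr using aux_it2 hs hf hr
  rw [this.deriv_eq]
  exact (aux_line3 hs hf hx d d).deriv

end calculus

theorem aux_hess {n : ℕ} {f : EuclideanSpace ℝ (Fin n) → ℝ} {s : Set (EuclideanSpace ℝ (Fin n))}
    (hs : IsOpen s) (hf : ContDiffOn ℝ 3 f s) {x : EuclideanSpace ℝ (Fin n)} (hx : x ∈ s)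
    {H : EuclideanSpace ℝ (Fin n) →L[ℝ] EuclideanSpace ℝ (Fin n)}
    (hH : HasFDerivAt (fun y => gradient f y) H x) (u v : EuclideanSpace ℝ (Fin n)) :
    ⟪u, H v⟫ = fderiv ℝ (fderiv ℝ f) x v u := by
  have hx0 : x + (0:ℝ) • v ∈ s := by simpa using hx
  have h1 := aux_line2 hs hf hx0 u
  have hH' : HasFDerivAt (fun y => gradient f y) H (x + (0:ℝ) • v) := by simpa using hH
  have h2 := hH'.comp_hasDerivAt 0 (aux_line x v 0)
  have h3 := (hasDerivAt_const (0:ℝ) u).inner ℝ h2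
  have h4 : (fun r : ℝ => fderiv ℝ f (x + r • v) u) =
      fun r : ℝ => ⟪u, ((fun y => gradient f y) ∘ fun r : ℝ => x + r • v) r⟫ := by
    funext r
    simp [inner_gradient_right]
  rw [h4] at h1
  have := h3.unique h1
  simpa using this

theorem aux_sc {n : ℕ} {f : EuclideanSpace ℝ (Fin n) → ℝ} {s : Set (EuclideanSpace ℝ (Fin n))}
    (hs : IsOpen s) (hf : ContDiffOn ℝ 3 f s) (hsc : StandardSelfConcordantOn f s)
    {x : EuclideanSpace ℝ (Fin n)} (hx : x ∈ s)
    (hp : ∀ u, u ≠ 0 → 0 < fderiv ℝ (fderiv ℝ f) x u u) (u : EuclideanSpace ℝ (Fin n)) :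
    |fderiv ℝ (fderiv ℝ (fderiv ℝ f)) x u u u| ≤ 2 * √(fderiv ℝ (fderiv ℝ f) x u u) ^ 3 := by
  have hx0 : x + (0:ℝ) • u ∈ s := by simpa using hx
  have h := hsc x hx u 0 hx0
  rw [aux_it2 hs hf hx0, aux_it3 hs hf hx0] at h
  simp only [zero_smul, add_zero] at h
  have h0 := aux_nonneg _ hp u
  rwa [Real.sqrt_eq_rpow, ← Real.rpow_natCast, ← Real.rpow_mul h0,
    show (1/2 * ((3:ℕ):ℝ)) = (3:ℝ)/2 by norm_num]


theorem aux_fin (lam : ℝ) (hlam : lam < 1 - Real.sqrt 2 / 2) (hm0 : 0 < 1 - lam) :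
    lam^2 / (1 - lam)^4 ≤ ((3 - 2 * lam) / (1 - 4 * lam + 2 * lam ^ 2)) * lam ^ 2 := by
    have hD : 0 < 1 - 4 * lam + 2 * lam ^ 2 := by
      have hsq2 : √(2:ℝ)^2 = 2 := Real.sq_sqrt (by norm_num)
      have hsqrt2 : 0 < √(2:ℝ) := by positivity
      nlinarith
    have hk : 1 / (1 - lam)^4 ≤ (3 - 2 * lam) / (1 - 4 * lam + 2 * lam ^ 2) := by
      rw [div_le_div_iff₀ (by positivity) hD]
      have : 0 < (1 - lam)^5 := by positivity
      have e : (3 - 2 * lam) * (1 - lam)^4 - 1 * (1 - 4 * lam + 2 * lam ^ 2)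
        = 2 * (1 - lam)^5 + ((1 - lam)^2 - 1)^2 := by ring
      linarith [sq_nonneg ((1 - lam)^2 - 1)]
    calc lam^2 / (1 - lam)^4 = 1 / (1 - lam)^4 * lam^2 := by ring
      _ ≤ _ := by gcongr

/-- contraction estimate for one inexact full-step proximal-Newton iteration:
if `λ_t = ‖x_t − x*_t‖_{x*_t} < 1 − √2/2` and `x⁺_t` is a `δ`-solution of the subproblem
`min F̂(·; t, x_t)` with exact solution `x̄⁺_t`, then
`λ⁺_t ≤ δ/(1 − λ_t) + ((3 − 2λ_t)/(1 − 4λ_t + 2λ_t²))·λ_t²`. -/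
theorem stmt5 {n : ℕ} (f g : EuclideanSpace ℝ (Fin n) → ℝ)
    (df dg : Set (EuclideanSpace ℝ (Fin n)))
    (hdf_open : IsOpen df) (hdf_conv : Convex ℝ df)
    (hf_smooth : ContDiffOn ℝ 3 f df)
    (hf_sc : StandardSelfConcordantOn f df)
    (hess : EuclideanSpace ℝ (Fin n) →
      EuclideanSpace ℝ (Fin n) →L[ℝ] EuclideanSpace ℝ (Fin n))
    (hhess : ∀ x ∈ df, HasFDerivAt (fun y => gradient f y) (hess x) x)
    (hpd : ∀ x ∈ df, ∀ u : EuclideanSpace ℝ (Fin n), u ≠ 0 → 0 < ⟪u, hess x u⟫)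
    (hg_cvx : ConvexOn ℝ dg g) (hg_lsc : LowerSemicontinuousOn g dg)
    (hg_proper : dg.Nonempty)
    (t : ℝ) (ht : 0 < t)
    -- `x*_t` is the unique minimizer of `F(·;t) = f + t⁻¹ g`
    (xs : EuclideanSpace ℝ (Fin n)) (hxs : xs ∈ df ∩ dg)
    (hmin : ∀ x ∈ df ∩ dg, f xs + t⁻¹ * g xs ≤ f x + t⁻¹ * g x)
    (huniq : ∀ x ∈ df ∩ dg, (∀ y ∈ df ∩ dg, f x + t⁻¹ * g x ≤ f y + t⁻¹ * g y) → x = xs)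
    (xt : EuclideanSpace ℝ (Fin n)) (hxt : xt ∈ df ∩ dg)
    (lam : ℝ) (hlam_def : lam = locNorm (hess xs) (xt - xs))
    (hlam : lam < 1 - Real.sqrt 2 / 2)
    -- the composite quadratic model `F̂(·; t, x_t)` around `x_t`
    (Fhat : EuclideanSpace ℝ (Fin n) → ℝ)
    (hFhat : ∀ x, Fhat x = f xt + ⟪gradient f xt, x - xt⟫ +
      (1/2) * ⟪x - xt, hess xt (x - xt)⟫ + t⁻¹ * g x)
    -- `x̄⁺_t` is the exact minimizer of the model
    (xb : EuclideanSpace ℝ (Fin n)) (hxb_mem : xb ∈ dg)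
    (hxb_min : ∀ y ∈ dg, Fhat xb ≤ Fhat y)
    -- `x⁺_t` is a `δ`-solution of the subproblem
    (δ : ℝ) (hδ : 0 ≤ δ)
    (xp : EuclideanSpace ℝ (Fin n)) (hxp : xp ∈ df ∩ dg)
    (hxp_δ : Fhat xp - Fhat xb ≤ δ ^ 2 / 2) :
    locNorm (hess xs) (xp - xs) ≤
      δ / (1 - lam) + ((3 - 2 * lam) / (1 - 4 * lam + 2 * lam ^ 2)) * lam ^ 2 := by
  have hQ : ∀ x ∈ df, ∀ u v, ⟪u, hess x v⟫ = fderiv ℝ (fderiv ℝ f) x v u :=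
    fun x hx u v => aux_hess hdf_open hf_smooth hx (hhess x hx) u v
  have hpos : ∀ x ∈ df, ∀ u, u ≠ 0 → 0 < fderiv ℝ (fderiv ℝ f) x u u := by
    intro x hx u hu
    rw [← hQ x hx]; exact hpd x hx u hu
  have hsym : ∀ x ∈ df, ∀ u v, fderiv ℝ (fderiv ℝ f) x u v = fderiv ℝ (fderiv ℝ f) x v u :=
    fun x hx u v => aux_sym2 hdf_open hf_smooth hx u v
  have hloc : ∀ u, locNorm (hess xs) u = √(fderiv ℝ (fderiv ℝ f) xs u u) := by
    intro u
    rw [locNorm, hQ xs hxs.1]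
  have htinv : 0 < t⁻¹ := inv_pos.2 ht
  have hl0 : 0 ≤ lam := by rw [hlam_def]; exact Real.sqrt_nonneg _
  have hsqrt2 : 0 < √(2:ℝ) := by positivity
  have hsq2 : √(2:ℝ)^2 = 2 := Real.sq_sqrt (by norm_num)
  have hl1 : lam < 1 := by linarith
  -- first-order optimality of `xs`
  have opt1 : ∀ y ∈ dg, 0 ≤ fderiv ℝ f xs (y - xs) + t⁻¹ * (g y - g xs) := by
    intro y hy
    have hx0 : xs + (0:ℝ) • (y - xs) ∈ df := by simpa using hxs.1
    have h1 := aux_line1 hdf_open hf_smooth hx0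
    rw [show xs + (0:ℝ) • (y - xs) = xs by simp] at h1
    apply aux_opt _ _ _ h1
    have hlt : ∀ᶠ r in nhdsWithin (0:ℝ) (Set.Ioi 0), r < 1 :=
      nhdsWithin_le_nhds (Iio_mem_nhds one_pos)
    filter_upwards [nhdsWithin_le_nhds (aux_ev hdf_open hx0), hlt, self_mem_nhdsWithin]
      with r hr hr1 hr0
    simp only [Set.mem_Ioi] at hr0
    have e : (1 - r) • xs + r • y = xs + r • (y - xs) := by module
    have hm : xs + r • (y - xs) ∈ dg := by
      rw [← e]; exact hg_cvx.1 hxs.2 hy (by linarith) hr0.le (by ring)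
    have hg := hg_cvx.2 hxs.2 hy (show 0 ≤ 1 - r by linarith) hr0.le (by ring)
    rw [e] at hg
    simp only [smul_eq_mul] at hg
    have hmm := hmin _ ⟨hr, hm⟩
    have := mul_le_mul_of_nonneg_left hg htinv.le
    simp only [zero_smul, add_zero]
    nlinarith
  have hFh : ∀ x, Fhat x = f xt + fderiv ℝ f xt (x - xt) +
      (1/2) * fderiv ℝ (fderiv ℝ f) xt (x - xt) (x - xt) + t⁻¹ * g x := by
    intro x
    rw [hFhat, hQ xt hxt.1, inner_gradient_left]
  -- first-order optimality of `xb`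
  have opt2 : ∀ y ∈ dg, 0 ≤ (fderiv ℝ f xt (y - xb) +
      fderiv ℝ (fderiv ℝ f) xt (xb - xt) (y - xb)) + t⁻¹ * (g y - g xb) := by
    intro y hy
    have h1 : HasDerivAt (fun r : ℝ => r * (fderiv ℝ f xt (y - xb) +
      fderiv ℝ (fderiv ℝ f) xt (xb - xt) (y - xb)) +
        r^2 * ((1/2) * fderiv ℝ (fderiv ℝ f) xt (y - xb) (y - xb)))
        (fderiv ℝ f xt (y - xb) + fderiv ℝ (fderiv ℝ f) xt (xb - xt) (y - xb)) 0 := by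
      have := ((hasDerivAt_id (0:ℝ)).mul_const (fderiv ℝ f xt (y - xb) +
        fderiv ℝ (fderiv ℝ f) xt (xb - xt) (y - xb))).add (((hasDerivAt_id (0:ℝ)).pow 2).mul_const
          ((1/2) * fderiv ℝ (fderiv ℝ f) xt (y - xb) (y - xb)))
      exact this.congr_deriv (by simp)
    apply aux_opt _ _ _ h1
    have hlt : ∀ᶠ r in nhdsWithin (0:ℝ) (Set.Ioi 0), r < 1 :=
      nhdsWithin_le_nhds (Iio_mem_nhds one_pos)
    filter_upwards [hlt, self_mem_nhdsWithin] with r hr1 hr0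
    simp only [Set.mem_Ioi] at hr0
    have e : (1 - r) • xb + r • y = xb + r • (y - xb) := by module
    have hm : xb + r • (y - xb) ∈ dg := by
      rw [← e]; exact hg_cvx.1 hxb_mem hy (by linarith) hr0.le (by ring)
    have hg := hg_cvx.2 hxb_mem hy (show 0 ≤ 1 - r by linarith) hr0.le (by ring)
    rw [e] at hg
    simp only [smul_eq_mul] at hg
    have hmm := hxb_min _ hm
    rw [hFh, hFh] at hmm
    rw [show xb + r • (y - xb) - xt = (xb - xt) + r • (y - xb) by abel] at hmm
    have hs := hsym xt hxt.1 (xb - xt) (y - xb)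
    generalize xb - xt = p at *
    generalize y - xb = q at *
    simp only [map_add, map_smul, _root_.add_apply, _root_.smul_apply, smul_eq_mul, ← hs] at hmm
    have := mul_le_mul_of_nonneg_left hg htinv.le
    nlinarith
  set d := xt - xs with hd
  have hmem : ∀ s ∈ Set.Icc (0:ℝ) 1, xs + s • d ∈ df := by
    intro s hs
    have e : (1 - s) • xs + s • xt = xs + s • d := by rw [hd]; module
    rw [← e]; exact hdf_conv hxs.1 hxt.1 (by linarith [hs.2]) hs.1 (by ring)
  have h0 : xs + (0:ℝ) • d = xs := by simp
  have h1 : xs + (1:ℝ) • d = xt := by rw [hd]; module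
  have hpos' : ∀ s ∈ Set.Icc (0:ℝ) 1, ∀ u, u ≠ 0 → 0 < fderiv ℝ (fderiv ℝ f) (xs + s • d) u u :=
    fun s hs => hpos _ (hmem s hs)
  have h13 : ∀ s ∈ Set.Icc (0:ℝ) 1, ∀ u v,
      fderiv ℝ (fderiv ℝ (fderiv ℝ f)) (xs + s • d) u u v =
        fderiv ℝ (fderiv ℝ (fderiv ℝ f)) (xs + s • d) v u u := by
    intro s hs u v
    rw [aux_sym23 hdf_open hf_smooth (hmem s hs) u u v, aux_sym12 hdf_open hf_smooth (hmem s hs) u v u]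
  have hT : ∀ s ∈ Set.Icc (0:ℝ) 1, ∀ u v,
      fderiv ℝ (fderiv ℝ (fderiv ℝ f)) (xs + s • d) v u u ≤
        2 * fderiv ℝ (fderiv ℝ f) (xs + s • d) u u * √(fderiv ℝ (fderiv ℝ f) (xs + s • d) v v) := by
    intro s hs u v
    rw [← h13 s hs]
    exact aux_polar _ (hsym _ (hmem s hs)) (hpos _ (hmem s hs)) _
      (aux_sym12 hdf_open hf_smooth (hmem s hs)) (aux_sym23 hdf_open hf_smooth (hmem s hs))
      (aux_sc hdf_open hf_smooth hf_sc (hmem s hs) (hpos _ (hmem s hs))) u v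
  have hlam0 : lam = √(fderiv ℝ (fderiv ℝ f) (xs + (0:ℝ) • d) d d) := by
    rw [h0, hlam_def, hloc]
  have hseg := aux_seg (fun s => fderiv ℝ (fderiv ℝ f) (xs + s • d))
    (fun s => fderiv ℝ (fderiv ℝ (fderiv ℝ f)) (xs + s • d)) d hpos'
    (fun s hs u v => aux_line3 hdf_open hf_smooth (hmem s hs) u v) hT lam hlam0 hl1 1 (by simp)
  have hgrad := aux_grad (fun s => fderiv ℝ (fderiv ℝ f) (xs + s • d))
    (fun s => fderiv ℝ (fderiv ℝ (fderiv ℝ f)) (xs + s • d)) d hpos'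
    (fun s hs u v => aux_line3 hdf_open hf_smooth (hmem s hs) u v) hT h13 lam hlam0 hl1 (xb - xs)
    (fun s => fderiv ℝ f (xs + s • d) (xb - xs))
    (fun s hs => aux_line2 hdf_open hf_smooth (hmem s hs) _)
  simp only [h0, h1, mul_one] at hseg hgrad
  have hcmp := fun u => (hseg.2 u).1
  have hm0 : 0 < 1 - lam := by linarith
  -- exact step
  have hstep1 : √(fderiv ℝ (fderiv ℝ f) xs (xb - xs) (xb - xs)) ≤ lam^2 / (1 - lam)^4 := by
    have o1 := opt1 xb hxb_mem
    have o2 := opt2 xs hxs.2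
    rw [show xs - xb = -(xb - xs) by abel, show xb - xt = (xb - xs) - d by rw [hd]; abel] at o2
    have hc := hcmp (xb - xs)
    have hnn := aux_nonneg _ (hpos xs hxs.1) (xb - xs)
    have hs := Real.sq_sqrt hnn
    have hge := Real.sqrt_nonneg (fderiv ℝ (fderiv ℝ f) xs (xb - xs) (xb - xs))
    generalize xb - xs = e at *
    simp only [map_neg, map_sub, _root_.sub_apply] at o2
    generalize √(fderiv ℝ (fderiv ℝ f) xs e e) = N at *
    rw [← hs] at hc
    have hb : (1 - lam)^2 * N^2 ≤ lam^2 / (1 - lam)^2 * N := by linarith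
    rcases hge.eq_or_lt with h | h
    · rw [← h]; positivity
    · have hb2 : (1 - lam)^2 * N ≤ lam^2 / (1 - lam)^2 := by
        by_contra hcon
        push Not at hcon
        have := mul_lt_mul_of_pos_right hcon h
        linarith
      rw [le_div_iff₀ (by positivity)] at hb2 ⊢
      calc _ = _ := by ring
        _ ≤ _ := hb2
  -- inexactness
  have hstep2 : √(fderiv ℝ (fderiv ℝ f) xs (xp - xb) (xp - xb)) ≤ δ / (1 - lam) := by
    have o2 := opt2 xp hxp.2
    have hc := hcmp (xp - xb)
    rw [hFh, hFh, show xp - xt = (xb - xt) + (xp - xb) by abel] at hxp_δ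
    have hs := hsym xt hxt.1 (xb - xt) (xp - xb)
    have hnn := aux_nonneg _ (hpos xs hxs.1) (xp - xb)
    have hs2 := Real.sq_sqrt hnn
    generalize xb - xt = p at *
    generalize xp - xb = q at *
    simp only [map_add, _root_.add_apply, ← hs] at hxp_δ
    rw [le_div_iff₀ hm0]
    apply le_of_sq_le_sq _ hδ
    rw [mul_pow, hs2]
    nlinarith
  have htri := aux_tri _ (hsym xs hxs.1) (hpos xs hxs.1) (xp - xb) (xb - xs)
  rw [sub_add_sub_cancel] at htri
  rw [hloc]
  have hfin : lam^2 / (1 - lam)^4 ≤ ((3 - 2 * lam) / (1 - 4 * lam + 2 * lam ^ 2)) * lam ^ 2 := 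
    aux_fin lam hlam hm0
  linarith
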